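/- Let V = V₁ ⊕ V₂ be a direct sum decomposition with g(u₁, u₂) = 0 for all u₁ ∈ V₁, u₂ ∈ V₂, and suppose the restriction g₁ of g to V₁ is nondegenerate. Let π : V → V₁ be the projection along V₂ and ι : V₁ → V the inclusion. If 𝔥 is a Berger subalgebra of so(g₁) (a Lie algebra of g₁-skew-symmetric endomorphisms of V₁), then its image {ι ∘ A ∘ π : A ∈ 𝔥} under the standard embedding is a Berger subalgebra of so(g); in particular each ι ∘ A ∘ π is g-skew-symmetric. -/

import Mathlib

/-- A formal curvature tensor on a real vector space `W`: an alternating bilinear map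
`R : W × W → End(W)` satisfying the Bianchi identity. -/
def IsFormalCurvature {W : Type*} [AddCommGroup W] [Module ℝ W]
    (R : W → W → Module.End ℝ W) : Prop :=
  (∀ u u' v : W, R (u + u') v = R u v + R u' v) ∧
  (∀ (c : ℝ) (u v : W), R (c • u) v = c • R u v) ∧
  (∀ u v v' : W, R u (v + v') = R u v + R u v') ∧
  (∀ (c : ℝ) (u v : W), R u (c • v) = c • R u v) ∧
  (∀ u : W, R u u = 0) ∧
  (∀ u v w : W, R u v w + R v w u + R w u v = 0)

/-- A set `h ⊆ End(W)` (e.g. a Lie subalgebra) is a Berger algebra if it is spanned,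
as a vector space, by the values of all formal curvature tensors whose values lie
in `h`. -/
def IsBerger {W : Type*} [AddCommGroup W] [Module ℝ W]
    (h : Set (Module.End ℝ W)) : Prop :=
  (Submodule.span ℝ {A : Module.End ℝ W |
      ∃ R, IsFormalCurvature R ∧ (∀ u v, R u v ∈ h) ∧ ∃ u v, R u v = A} :
    Set (Module.End ℝ W)) = h

/-- Let `V = V₁ ⊕ V₂` with `g(V₁, V₂) = 0` and `g₁ = g|_{V₁}`
nondegenerate, `π : V → V₁` the projection along `V₂`, `ι : V₁ → V` the inclusion.
If `𝔥 ⊆ so(g₁)` is a Berger subalgebra, then its image `{ι ∘ A ∘ π : A ∈ 𝔥}` under the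
standard embedding is a Berger subalgebra of `so(g)`; in particular each `ι ∘ A ∘ π`
is `g`-skew-symmetric. -/
theorem stmt14 (V : Type*) [AddCommGroup V] [Module ℝ V] [FiniteDimensional ℝ V]
    (g : LinearMap.BilinForm ℝ V) (hg_symm : ∀ u v : V, g u v = g v u)
    (hg_nd : g.Nondegenerate)
    (V₁ V₂ : Submodule ℝ V) (hcompl : IsCompl V₁ V₂)
    (horth : ∀ u₁ ∈ V₁, ∀ u₂ ∈ V₂, g u₁ u₂ = 0)
    (hnd₁ : ∀ u : V₁, (∀ v : V₁, g (u : V) (v : V) = 0) → u = 0)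
    (π : V →ₗ[ℝ] V₁) (hπ₁ : ∀ x : V₁, π (x : V) = x) (hπ₂ : ∀ x ∈ V₂, π x = 0)
    (h : Submodule ℝ (Module.End ℝ V₁))
    -- `h` consists of `g₁`-skew-symmetric endomorphisms of `V₁`
    (hskew : ∀ A ∈ h, ∀ u v : V₁, g (A u : V) (v : V) = - g (u : V) (A v : V))
    -- `h` is a Lie subalgebra
    (hlie : ∀ A ∈ h, ∀ B ∈ h, A * B - B * A ∈ h)
    -- `h` is a Berger algebra
    (hberger : IsBerger (h : Set (Module.End ℝ V₁))) :
    (∀ B ∈ {B : Module.End ℝ V | ∃ A ∈ h, B = V₁.subtype ∘ₗ A ∘ₗ π},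
        ∀ u v : V, g (B u) v = - g u (B v)) ∧
    (Submodule.span ℝ
        {B : Module.End ℝ V | ∃ A ∈ h, B = V₁.subtype ∘ₗ A ∘ₗ π} :
        Set (Module.End ℝ V)) =
      {B : Module.End ℝ V | ∃ A ∈ h, B = V₁.subtype ∘ₗ A ∘ₗ π} ∧
    IsBerger {B : Module.End ℝ V | ∃ A ∈ h, B = V₁.subtype ∘ₗ A ∘ₗ π} := by
  have hdec : ∀ u : V, u - (π u : V) ∈ V₂ := by
    intro u
    have hu : u ∈ V₁ ⊔ V₂ := by rw [hcompl.sup_eq_top]; trivial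
    obtain ⟨a, ha, b, hb, rfl⟩ := Submodule.mem_sup.1 hu
    have h1 : π a = ⟨a, ha⟩ := hπ₁ ⟨a, ha⟩
    rw [map_add, h1, hπ₂ b hb]
    simpa using hb
  have hleft : ∀ (x : V₁) (v : V), g (x : V) v = g (x : V) (π v : V) := by
    intro x v
    have := horth x x.2 _ (hdec v)
    rw [map_sub] at this
    linarith
  let Φ : Module.End ℝ V₁ →ₗ[ℝ] Module.End ℝ V :=
    { toFun := fun A => V₁.subtype ∘ₗ A ∘ₗ π
      map_add' := by intro A B; ext x; simp
      map_smul' := by intro c A; ext x; simp }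
  have hΦ : ∀ A, Φ A = V₁.subtype ∘ₗ A ∘ₗ π := fun A => rfl
  have hset : {B : Module.End ℝ V | ∃ A ∈ h, B = V₁.subtype ∘ₗ A ∘ₗ π}
      = (Submodule.map Φ h : Set (Module.End ℝ V)) := by
    ext B
    constructor
    · rintro ⟨A, hA, rfl⟩
      exact ⟨A, hA, rfl⟩
    · rintro ⟨A, hA, rfl⟩
      exact ⟨A, hA, rfl⟩
  refine ⟨?_, ?_, ?_⟩
  · rintro B ⟨A, hA, rfl⟩ u v
    have e1 := hleft (A (π u)) v
    have e2 := hleft (A (π v)) u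
    have e3 := hskew A hA (π u) (π v)
    have e4 := hg_symm u (A (π v) : V)
    have e5 := hg_symm (π u : V) (A (π v) : V)
    simp only [LinearMap.comp_apply, Submodule.subtype_apply]
    linarith
  · rw [hset, Submodule.span_eq]
  · rw [hset]
    unfold IsBerger at hberger ⊢
    rw [SetLike.coe_set_eq] at hberger ⊢
    apply le_antisymm
    · rw [Submodule.span_le]
      rintro B ⟨R, -, hR, u, v, rfl⟩
      exact hR u v
    · conv_lhs => rw [← hberger]
      rw [Submodule.map_span, Submodule.span_le]
      rintro _ ⟨A, ⟨R, ⟨r1, r2, r3, r4, r5, r6⟩, hR, u, v, rfl⟩, rfl⟩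
      apply Submodule.subset_span
      refine ⟨fun x y => Φ (R (π x) (π y)), ⟨?_, ?_, ?_, ?_, ?_, ?_⟩, ?_, (u : V), (v : V), ?_⟩
      · intro x x' y
        simp only [map_add, r1]
      · intro c x y
        simp only [map_smul, r2]
      · intro x y y'
        simp only [map_add, r3]
      · intro c x y
        simp only [map_smul, r4]
      · intro x
        simp only [r5, map_zero]
      · intro x y z
        have := congrArg (fun t : V₁ => (t : V)) (r6 (π x) (π y) (π z))
        simpa [hΦ] using this
      · intro x y
        exact ⟨_, hR _ _, rfl⟩
      · simp only [hπ₁]
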